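/- Fix γ > 0 and real (or complex) parameters c₁, c₂, c₃, c₄ with c₁ + c₂ + c₃ + c₄ = 1. Let Q : ℝ² → ℂ be smooth (infinitely differentiable) and fix (x, z) ∈ ℝ². Define I*Q(x, z; h) = c₁·Q(x, z) + c₂·I⁽²⁾Q(x, z; h) + c₃·I⁽³⁾Q(x, z; h) + c₄·I⁽⁴⁾Q(x, z; h), where I⁽²⁾Q = (1/3)·[Q(x−h, z) + Q(x+h, z) + Q(x, z−γh) + Q(x, z+γh)] − (1/12)·[Q(x−2h, z) + Q(x+2h, z) + Q(x, z−2γh) + Q(x, z+2γh)], I⁽³⁾Q = (1/3)·[Q(x−h, z−γh) + Q(x+h, z+γh) + Q(x−h, z+γh) + Q(x+h, z−γh)] − (1/12)·[Q(x−2h, z−2γh) + Q(x+2h, z+2γh) + Q(x−2h, z+2γh) + Q(x+2h, z−2γh)], and I⁽⁴⁾Q = (1/36)·[Q(x−2h, z−2γh) + Q(x−2h, z+2γh) + Q(x+2h, z−2γh) + Q(x+2h, z+2γh)] − (1/9)·[Q(x−h, z−2γh) + Q(x+h, z−2γh) + Q(x−2h, z−γh) + Q(x+2h, z−γh) + Q(x−h,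 z+2γh) + Q(x+h, z+2γh) + Q(x−2h, z+γh) + Q(x+2h, z+γh)] + (4/9)·[Q(x−h, z−γh) + Q(x+h, z−γh) + Q(x−h, z+γh) + Q(x+h, z+γh)]. Then I*Q(x, z; h) = Q(x, z) − h⁴·[((c₂ + 2c₃ + 2c₄)/12)·(∂⁴Q/∂x⁴ + γ⁴·∂⁴Q/∂z⁴) + c₃·γ²·∂⁴Q/∂x²∂z²](x, z) + O(h⁶) as h → 0⁺. -/

import Mathlib

noncomputable section

/-- The orthogonal-neighbor mass-lumping operator `I⁽²⁾`. -/
def I2 (γ : ℝ) (Q : ℝ × ℝ → ℂ) (x z h : ℝ) : ℂ :=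
  (1 / 3) * (Q (x - h, z) + Q (x + h, z) + Q (x, z - γ * h) + Q (x, z + γ * h))
    - (1 / 12) * (Q (x - 2 * h, z) + Q (x + 2 * h, z)
        + Q (x, z - 2 * γ * h) + Q (x, z + 2 * γ * h))

/-- The diagonal-neighbor mass-lumping operator `I⁽³⁾`. -/
def I3 (γ : ℝ) (Q : ℝ × ℝ → ℂ) (x z h : ℝ) : ℂ :=
  (1 / 3) * (Q (x - h, z - γ * h) + Q (x + h, z + γ * h)
      + Q (x - h, z + γ * h) + Q (x + h, z - γ * h))
    - (1 / 12) * (Q (x - 2 * h, z - 2 * γ * h) + Q (x + 2 * h, z + 2 * γ * h)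
        + Q (x - 2 * h, z + 2 * γ * h) + Q (x + 2 * h, z - 2 * γ * h))

/-- The 16-point ring mass-lumping operator `I⁽⁴⁾`. -/
def I4 (γ : ℝ) (Q : ℝ × ℝ → ℂ) (x z h : ℝ) : ℂ :=
  (1 / 36) * (Q (x - 2 * h, z - 2 * γ * h) + Q (x - 2 * h, z + 2 * γ * h)
      + Q (x + 2 * h, z - 2 * γ * h) + Q (x + 2 * h, z + 2 * γ * h))
    - (1 / 9) * (Q (x - h, z - 2 * γ * h) + Q (x + h, z - 2 * γ * h)
        + Q (x - 2 * h, z - γ * h) + Q (x + 2 * h, z - γ * h)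
        + Q (x - h, z + 2 * γ * h) + Q (x + h, z + 2 * γ * h)
        + Q (x - 2 * h, z + γ * h) + Q (x + 2 * h, z + γ * h))
    + (4 / 9) * (Q (x - h, z - γ * h) + Q (x + h, z - γ * h)
        + Q (x - h, z + γ * h) + Q (x + h, z + γ * h))

/-- The weighted mass-lumping operator `I*` of the point-weighting 25-point scheme. -/
def Istar (γ c₁ c₂ c₃ c₄ : ℝ) (Q : ℝ × ℝ → ℂ) (x z h : ℝ) : ℂ :=
  (c₁ : ℂ) * Q (x, z) + (c₂ : ℂ) * I2 γ Q x z h + (c₃ : ℂ) * I3 γ Q x z h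
    + (c₄ : ℂ) * I4 γ Q x z h

/-- ∂⁴Q/∂x⁴ at (x, z). -/
def Dx4 (Q : ℝ × ℝ → ℂ) (x z : ℝ) : ℂ := iteratedDeriv 4 (fun t => Q (t, z)) x

/-- ∂⁴Q/∂z⁴ at (x, z). -/
def Dz4 (Q : ℝ × ℝ → ℂ) (x z : ℝ) : ℂ := iteratedDeriv 4 (fun t => Q (x, t)) z

/-- ∂⁴Q/∂x²∂z² at (x, z). -/
def Dx2z2 (Q : ℝ × ℝ → ℂ) (x z : ℝ) : ℂ :=
  iteratedDeriv 2 (fun t => iteratedDeriv 2 (fun s => Q (t, s)) z) x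

def Px (F : ℝ × ℝ → ℂ) : ℝ × ℝ → ℂ := fun p => fderiv ℝ F p (1, 0)
def Pz (F : ℝ × ℝ → ℂ) : ℝ × ℝ → ℂ := fun p => fderiv ℝ F p (0, 1)

lemma smooth_dir {F : ℝ × ℝ → ℂ} (hF : ContDiff ℝ (⊤ : ℕ∞) F) (v : ℝ × ℝ) :
    ContDiff ℝ (⊤ : ℕ∞) (fun p => fderiv ℝ F p v) :=
  (hF.fderiv_right (m := (⊤ : ℕ∞)) (by simp)).clm_apply contDiff_const

lemma smooth_Px {F : ℝ × ℝ → ℂ} (hF : ContDiff ℝ (⊤ : ℕ∞) F) :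
    ContDiff ℝ (⊤ : ℕ∞) (Px F) := smooth_dir hF _
lemma smooth_Pz {F : ℝ × ℝ → ℂ} (hF : ContDiff ℝ (⊤ : ℕ∞) F) :
    ContDiff ℝ (⊤ : ℕ∞) (Pz F) := smooth_dir hF _

lemma smooth_Px_iter {F : ℝ × ℝ → ℂ} (hF : ContDiff ℝ (⊤ : ℕ∞) F) (n : ℕ) :
    ContDiff ℝ (⊤ : ℕ∞) (Px^[n] F) := by
  induction n with
  | zero => exact hF
  | succ n ih => rw [Function.iterate_succ_apply']; exact smooth_Px ih
lemma smooth_Pz_iter {F : ℝ × ℝ → ℂ} (hF : ContDiff ℝ (⊤ : ℕ∞) F) (n : ℕ) :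
    ContDiff ℝ (⊤ : ℕ∞) (Pz^[n] F) := by
  induction n with
  | zero => exact hF
  | succ n ih => rw [Function.iterate_succ_apply']; exact smooth_Pz ih

lemma P_comm {F : ℝ × ℝ → ℂ} (hF : ContDiff ℝ (⊤ : ℕ∞) F) : Pz (Px F) = Px (Pz F) := by
  funext p
  have hd : DifferentiableAt ℝ (fderiv ℝ F) p :=
    ((hF.fderiv_right (m := (⊤ : ℕ∞)) (by simp)).differentiable (by simp)) p
  have key : ∀ v w : ℝ × ℝ, fderiv ℝ (fun p => fderiv ℝ F p v) p w
      = fderiv ℝ (fderiv ℝ F) p w v := by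
    intro v w
    rw [fderiv_clm_apply hd (differentiableAt_const v)]
    simp
  have hs : IsSymmSndFDerivAt ℝ F p := by
    apply hF.contDiffAt.isSymmSndFDerivAt
    simp only [minSmoothness_of_isRCLikeNormedField]
    exact WithTop.coe_le_coe.2 (le_top (a := (2 : ℕ∞)))
  change fderiv ℝ (fun p => fderiv ℝ F p (1, 0)) p (0, 1)
    = fderiv ℝ (fun p => fderiv ℝ F p (0, 1)) p (1, 0)
  rw [key, key]
  exact hs.eq _ _

def qq (Q : ℝ × ℝ → ℂ) (i j : ℕ) : ℝ × ℝ → ℂ := Px^[i] (Pz^[j] Q)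

lemma smooth_qq {Q : ℝ × ℝ → ℂ} (hQ : ContDiff ℝ (⊤ : ℕ∞) Q) (i j : ℕ) :
    ContDiff ℝ (⊤ : ℕ∞) (qq Q i j) := smooth_Px_iter (smooth_Pz_iter hQ j) i

lemma Px_qq (Q : ℝ × ℝ → ℂ) (i j : ℕ) : Px (qq Q i j) = qq Q (i + 1) j := by
  simp only [qq, Function.iterate_succ_apply']

lemma Pz_qq {Q : ℝ × ℝ → ℂ} (hQ : ContDiff ℝ (⊤ : ℕ∞) Q) (i j : ℕ) :
    Pz (qq Q i j) = qq Q i (j + 1) := by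
  induction i with
  | zero => simp only [qq, Function.iterate_succ_apply', Function.iterate_zero, id]
  | succ i ih => rw [← Px_qq, P_comm (smooth_qq hQ i j), ih, Px_qq]

lemma line_deriv {F : ℝ × ℝ → ℂ} (hF : ContDiff ℝ (⊤ : ℕ∞) F) (x z a b t : ℝ) :
    HasDerivAt (fun t : ℝ => F (x + t * a, z + t * b))
      ((a : ℂ) * Px F (x + t * a, z + t * b) + (b : ℂ) * Pz F (x + t * a, z + t * b)) t := by
  have h1 : HasDerivAt (fun t : ℝ => ((x + t * a, z + t * b) : ℝ × ℝ)) (a, b) t := by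
    have ha : HasDerivAt (fun t : ℝ => x + t * a) a t := by
      simpa using ((hasDerivAt_id t).mul_const a).const_add x
    have hb : HasDerivAt (fun t : ℝ => z + t * b) b t := by
      simpa using ((hasDerivAt_id t).mul_const b).const_add z
    exact ha.prodMk hb
  have h2 : HasFDerivAt F (fderiv ℝ F (x + t * a, z + t * b)) (x + t * a, z + t * b) :=
    ((hF.differentiable (by simp)) _).hasFDerivAt
  have h3 := h2.comp_hasDerivAt t h1
  have e : ((a, b) : ℝ × ℝ) = a • (1, 0) + b • (0, 1) := by simp
  refine h3.congr_deriv ?_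
  rw [e, map_add, map_smul, map_smul]
  simp [Px, Pz]

lemma qq_line {Q : ℝ × ℝ → ℂ} (hQ : ContDiff ℝ (⊤ : ℕ∞) Q) (x z a b t : ℝ) (i j : ℕ) :
    HasDerivAt (fun t : ℝ => qq Q i j (x + t * a, z + t * b))
      ((a : ℂ) * qq Q (i + 1) j (x + t * a, z + t * b)
        + (b : ℂ) * qq Q i (j + 1) (x + t * a, z + t * b)) t := by
  have := line_deriv (smooth_qq hQ i j) x z a b t
  rwa [Px_qq, Pz_qq hQ] at this

lemma iter_x {F : ℝ × ℝ → ℂ} (hF : ContDiff ℝ (⊤ : ℕ∞) F) (n : ℕ) (z : ℝ) :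
    iteratedDeriv n (fun t => F (t, z)) = fun t => (Px^[n] F) (t, z) := by
  induction n with
  | zero => simp
  | succ n ih =>
    rw [iteratedDeriv_succ, ih]
    funext t
    have := line_deriv (smooth_Px_iter hF n) 0 z 1 0 t
    simp only [zero_add, mul_one, mul_zero, add_zero, Complex.ofReal_one, Complex.ofReal_zero,
      one_mul, zero_mul] at this
    rw [this.deriv, Function.iterate_succ_apply']

lemma iter_z {F : ℝ × ℝ → ℂ} (hF : ContDiff ℝ (⊤ : ℕ∞) F) (n : ℕ) (x : ℝ) :
    iteratedDeriv n (fun t => F (x, t)) = fun t => (Pz^[n] F) (x, t) := by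
  induction n with
  | zero => simp
  | succ n ih =>
    rw [iteratedDeriv_succ, ih]
    funext t
    have := line_deriv (smooth_Pz_iter hF n) x 0 0 1 t
    simp only [zero_add, mul_one, mul_zero, add_zero, Complex.ofReal_one, Complex.ofReal_zero,
      one_mul, zero_mul] at this
    rw [this.deriv, Function.iterate_succ_apply']

/-- degree-`k` homogeneous directional derivative -/
def gg (Q : ℝ × ℝ → ℂ) (a b : ℂ) (p : ℝ × ℝ) : ℕ → ℂ
  | 0 => qq Q 0 0 p
  | 1 => a * qq Q 1 0 p + b * qq Q 0 1 p
  | 2 => a ^ 2 * qq Q 2 0 p + 2 * a * b * qq Q 1 1 p + b ^ 2 * qq Q 0 2 p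
  | 3 => a ^ 3 * qq Q 3 0 p + 3 * a ^ 2 * b * qq Q 2 1 p + 3 * a * b ^ 2 * qq Q 1 2 p
      + b ^ 3 * qq Q 0 3 p
  | 4 => a ^ 4 * qq Q 4 0 p + 4 * a ^ 3 * b * qq Q 3 1 p + 6 * a ^ 2 * b ^ 2 * qq Q 2 2 p
      + 4 * a * b ^ 3 * qq Q 1 3 p + b ^ 4 * qq Q 0 4 p
  | 5 => a ^ 5 * qq Q 5 0 p + 5 * a ^ 4 * b * qq Q 4 1 p + 10 * a ^ 3 * b ^ 2 * qq Q 3 2 p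
      + 10 * a ^ 2 * b ^ 3 * qq Q 2 3 p + 5 * a * b ^ 4 * qq Q 1 4 p + b ^ 5 * qq Q 0 5 p
  | _ => 0

lemma gg_deriv {Q : ℝ × ℝ → ℂ} (hQ : ContDiff ℝ (⊤ : ℕ∞) Q) (x z a b t : ℝ) (k : ℕ)
    (hk : k < 5) :
    HasDerivAt (fun t : ℝ => gg Q a b (x + t * a, z + t * b) k)
      (gg Q a b (x + t * a, z + t * b) (k + 1)) t := by
  have H := qq_line hQ x z a b t
  interval_cases k
  · exact (H 0 0)
  · have := ((H 1 0).const_mul (a : ℂ)).add ((H 0 1).const_mul (b : ℂ))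
    refine this.congr_deriv ?_
    simp only [gg]; ring
  · have := (((H 2 0).const_mul ((a : ℂ) ^ 2)).add ((H 1 1).const_mul (2 * (a : ℂ) * b))).add
      ((H 0 2).const_mul ((b : ℂ) ^ 2))
    refine this.congr_deriv ?_
    simp only [gg]; ring
  · have := ((((H 3 0).const_mul ((a : ℂ) ^ 3)).add
      ((H 2 1).const_mul (3 * (a : ℂ) ^ 2 * b))).add
      ((H 1 2).const_mul (3 * (a : ℂ) * b ^ 2))).add ((H 0 3).const_mul ((b : ℂ) ^ 3))
    refine this.congr_deriv ?_
    simp only [gg]; ring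
  · have := (((((H 4 0).const_mul ((a : ℂ) ^ 4)).add
      ((H 3 1).const_mul (4 * (a : ℂ) ^ 3 * b))).add
      ((H 2 2).const_mul (6 * (a : ℂ) ^ 2 * b ^ 2))).add
      ((H 1 3).const_mul (4 * (a : ℂ) * b ^ 3))).add ((H 0 4).const_mul ((b : ℂ) ^ 4))
    refine this.congr_deriv ?_
    simp only [gg]; ring

lemma gg_iter {Q : ℝ × ℝ → ℂ} (hQ : ContDiff ℝ (⊤ : ℕ∞) Q) (x z a b : ℝ) (k : ℕ)
    (hk : k ≤ 5) :
    iteratedDeriv k (fun t : ℝ => Q (x + t * a, z + t * b))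
      = fun t : ℝ => gg Q a b (x + t * a, z + t * b) k := by
  induction k with
  | zero => simp [gg, qq]
  | succ k ih =>
    rw [iteratedDeriv_succ, ih (by omega)]
    funext t
    exact (gg_deriv hQ x z a b t k (by omega)).deriv

def RR (Q : ℝ × ℝ → ℂ) (x z a b h : ℝ) : ℂ :=
  Q (x + h * a, z + h * b) - (gg Q a b (x, z) 0 + h * gg Q a b (x, z) 1
    + h ^ 2 / 2 * gg Q a b (x, z) 2 + h ^ 3 / 6 * gg Q a b (x, z) 3
    + h ^ 4 / 24 * gg Q a b (x, z) 4 + h ^ 5 / 120 * gg Q a b (x, z) 5)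

open Asymptotics Topology Filter in
lemma RR_bigO {Q : ℝ × ℝ → ℂ} (hQ : ContDiff ℝ (⊤ : ℕ∞) Q) (x z a b : ℝ) :
    (RR Q x z a b) =O[𝓝[>] 0] (fun h : ℝ => h ^ 6) := by
  set f : ℝ → ℂ := fun t : ℝ => Q (x + t * a, z + t * b) with hf
  have hfs : ContDiff ℝ (⊤ : ℕ∞) f := hQ.comp (by fun_prop)
  have hfs6 : ContDiff ℝ 6 f := hfs.of_le (WithTop.coe_le_coe.2 (le_top (a := (6 : ℕ∞))))
  obtain ⟨C, hC⟩ := exists_taylor_mean_remainder_bound (f := f) (a := 0) (b := 1) (n := 5)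
    zero_le_one (by exact_mod_cast hfs6.contDiffOn)
  have hit : ∀ k ≤ 5, iteratedDerivWithin k f (Set.Icc 0 1) 0 = gg Q a b (x, z) k := by
    intro k hk
    rw [iteratedDerivWithin_eq_iteratedDeriv (uniqueDiffOn_Icc zero_lt_one)
      ((hfs.of_le (by exact_mod_cast le_top)).contDiffAt) (by simp), hf, gg_iter hQ x z a b k hk]
    simp
  refine IsBigO.of_bound C ?_
  filter_upwards [Ioo_mem_nhdsGT (zero_lt_one (α := ℝ))] with h hh
  have := hC h ⟨hh.1.le, hh.2.le⟩
  simp only [taylorWithinEval_succ, taylor_within_zero_eval, sub_zero] at this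
  rw [Real.norm_of_nonneg (by positivity [hh.1])]
  have e0 : f 0 = gg Q a b (x, z) 0 := by simp [hf, gg, qq]
  rw [hit _ (by norm_num), hit _ (by norm_num), hit _ (by norm_num), hit _ (by norm_num),
    hit _ (by norm_num), e0] at this
  refine le_trans (le_of_eq ?_) this
  congr 1
  simp only [RR, Complex.real_smul, hf]
  push_cast [Nat.factorial]
  ring

open Asymptotics Topology Filter

/-- expansion of the weighted mass-lumping operator I* of the
point-weighting 25-point scheme. -/
theorem Istar_expansion
    (γ : ℝ) (hγ : 0 < γ) (c₁ c₂ c₃ c₄ : ℝ) (hc : c₁ + c₂ + c₃ + c₄ = 1)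
    (Q : ℝ × ℝ → ℂ) (hQ : ContDiff ℝ (⊤ : ℕ∞) Q) (x z : ℝ) :
    ∃ C δ : ℝ, 0 < C ∧ 0 < δ ∧ ∀ h : ℝ, 0 < h → h < δ →
      ‖Istar γ c₁ c₂ c₃ c₄ Q x z h - (Q (x, z)
          - (h : ℂ) ^ 4 * ((((c₂ : ℂ) + 2 * (c₃ : ℂ) + 2 * (c₄ : ℂ)) / 12)
                * (Dx4 Q x z + (γ : ℂ) ^ 4 * Dz4 Q x z)
              + (c₃ : ℂ) * (γ : ℂ) ^ 2 * Dx2z2 Q x z))‖ ≤ C * h ^ 6 := by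
  have hb := RR_bigO hQ x z
  have h40 : Dx4 Q x z = qq Q 4 0 (x, z) := by rw [Dx4, iter_x hQ]; rfl
  have h04 : Dz4 Q x z = qq Q 0 4 (x, z) := by rw [Dz4, iter_z hQ]; rfl
  have h22 : Dx2z2 Q x z = qq Q 2 2 (x, z) := by
    rw [Dx2z2]
    simp only [iter_z hQ]
    rw [iter_x (smooth_Pz_iter hQ 2)]; rfl
  -- the remainder as a combination of Taylor remainders
  have hO : (fun h : ℝ => (c₂ : ℂ) * ((1 / 3) * (RR Q x z (-1) 0 h + RR Q x z 1 0 h + RR Q x z 0 (-γ) h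
          + RR Q x z 0 γ h)
        - (1 / 12) * (RR Q x z (-2) 0 h + RR Q x z 2 0 h + RR Q x z 0 (-(2 * γ)) h
          + RR Q x z 0 (2 * γ) h))
      + (c₃ : ℂ) * ((1 / 3) * (RR Q x z (-1) (-γ) h + RR Q x z 1 γ h + RR Q x z (-1) γ h
          + RR Q x z 1 (-γ) h)
        - (1 / 12) * (RR Q x z (-2) (-(2 * γ)) h + RR Q x z 2 (2 * γ) h
          + RR Q x z (-2) (2 * γ) h + RR Q x z 2 (-(2 * γ)) h))
      + (c₄ : ℂ) * ((1 / 36) * (RR Q x z (-2) (-(2 * γ)) h + RR Q x z (-2) (2 * γ) h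
          + RR Q x z 2 (-(2 * γ)) h + RR Q x z 2 (2 * γ) h)
        - (1 / 9) * (RR Q x z (-1) (-(2 * γ)) h + RR Q x z 1 (-(2 * γ)) h
          + RR Q x z (-2) (-γ) h + RR Q x z 2 (-γ) h
          + RR Q x z (-1) (2 * γ) h + RR Q x z 1 (2 * γ) h
          + RR Q x z (-2) γ h + RR Q x z 2 γ h)
        + (4 / 9) * (RR Q x z (-1) (-γ) h + RR Q x z 1 (-γ) h + RR Q x z (-1) γ h
          + RR Q x z 1 γ h))) =O[𝓝[>] 0] (fun h : ℝ => h ^ 6) := by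
    refine ((IsBigO.add ?_ ?_).add ?_)
    · refine IsBigO.const_mul_left (IsBigO.sub (IsBigO.const_mul_left ?_ _)
        (IsBigO.const_mul_left ?_ _)) _ <;>
      exact (((hb _ _).add (hb _ _)).add (hb _ _)).add (hb _ _)
    · refine IsBigO.const_mul_left (IsBigO.sub (IsBigO.const_mul_left ?_ _)
        (IsBigO.const_mul_left ?_ _)) _ <;>
      exact (((hb _ _).add (hb _ _)).add (hb _ _)).add (hb _ _)
    · refine IsBigO.const_mul_left (IsBigO.add (IsBigO.sub (IsBigO.const_mul_left ?_ _)
        (IsBigO.const_mul_left ?_ _)) (IsBigO.const_mul_left ?_ _)) _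
      · exact (((hb _ _).add (hb _ _)).add (hb _ _)).add (hb _ _)
      · exact (((((((hb _ _).add (hb _ _)).add (hb _ _)).add (hb _ _)).add (hb _ _)).add
          (hb _ _)).add (hb _ _)).add (hb _ _)
      · exact (((hb _ _).add (hb _ _)).add (hb _ _)).add (hb _ _)
  obtain ⟨C, hCpos, hC⟩ := hO.exists_pos
  rw [isBigOWith_iff] at hC
  obtain ⟨δ, hδ, hsub⟩ := mem_nhdsGT_iff_exists_Ioo_subset.mp hC
  refine ⟨C, δ, hCpos, hδ, fun h h0 h1 => ?_⟩
  have hfin := hsub ⟨h0, h1⟩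
  simp only [Set.mem_ofPred_eq] at hfin
  rw [Real.norm_of_nonneg (by positivity)] at hfin
  refine le_trans (le_of_eq ?_) hfin
  congr 1
  have hc1 : (c₁ : ℂ) = 1 - c₂ - c₃ - c₄ := by
    have : c₁ = 1 - c₂ - c₃ - c₄ := by linarith
    rw [this]; push_cast; ring
  have hq0 : Q (x, z) = qq Q 0 0 (x, z) := rfl
  have m1 : x - h = x + h * (-1) := by ring
  have m2 : x - 2 * h = x + h * (-2) := by ring
  have p1 : x + h = x + h * 1 := by ring
  have p2 : x + 2 * h = x + h * 2 := by ring
  have n1 : z - γ * h = z + h * (-γ) := by ring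
  have n2 : z - 2 * γ * h = z + h * (-(2 * γ)) := by ring
  have r1 : z + γ * h = z + h * γ := by ring
  have r2 : z + 2 * γ * h = z + h * (2 * γ) := by ring
  simp only [Istar, I2, I3, I4, RR, gg, h40, h04, h22, hc1]
  rw [m1, m2, p2, n1, n2, r1, r2, hq0]
  simp only [mul_zero, mul_one, add_zero]
  push_cast
  ring

end
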